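/- Let α, β : ℕ → ℝ both be negligible, where a function f : ℕ → ℝ is negligible if for every polynomial p with real coefficients satisfying p(x) > 0 for every natural number x, there exists x' ∈ ℕ such that f(x) < 1/p(x) for all x > x'. Let a, b : ℕ → ℝ be functions such that for all k: 0 ≤ a(k) < α(k) and 1 − β(k) ≤ b(k) ≤ 1. Then the function k ↦ |b(k) − a(k)| is not negligible (indeed |b(k) − a(k)| > 1 − α(k) − β(k) for all k). -/

import Mathlib

/-!
The pointwise bound is `|b - a| ≥ b - a > (1 - β) - α`. If `|b - a|` were negligible, then testing
it, `α` and `β` against the constant polynomial `3` would make all three smaller than `1/3` at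
some common argument, while the pointwise bound says that their sum exceeds `1` everywhere.
-/

/-- A function `f : ℕ → ℝ` is negligible if for every polynomial `p` with real
coefficients that is positive on all naturals, `f x < 1 / p x` for all
sufficiently large `x`. -/
def Negligible (f : ℕ → ℝ) : Prop :=
  ∀ p : Polynomial ℝ, (∀ x : ℕ, 0 < p.eval (x : ℝ)) →
    ∃ x' : ℕ, ∀ x : ℕ, x > x' → f x < 1 / p.eval (x : ℝ)

theorem whitebox_advantage_not_negligible
    (α β : ℕ → ℝ) (hα : Negligible α) (hβ : Negligible β)
    (a b : ℕ → ℝ)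
    (ha : ∀ k, 0 ≤ a k ∧ a k < α k)
    (hb : ∀ k, 1 - β k ≤ b k ∧ b k ≤ 1) :
    (¬ Negligible (fun k => |b k - a k|)) ∧
      ∀ k, |b k - a k| > 1 - α k - β k := by
  have key : ∀ k, |b k - a k| > 1 - α k - β k := fun k => by
    linarith [le_abs_self (b k - a k), (ha k).2, (hb k).1]
  refine ⟨fun h => ?_, key⟩
  have eventually_lt_third : ∀ f : ℕ → ℝ, Negligible f → ∃ n : ℕ, ∀ x > n, f x < 1 / 3 :=
    fun f hf => by simpa using hf (Polynomial.C 3) (by simp)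
  obtain ⟨n₁, h₁⟩ := eventually_lt_third _ hα
  obtain ⟨n₂, h₂⟩ := eventually_lt_third _ hβ
  obtain ⟨n₃, h₃⟩ := eventually_lt_third _ h
  have e₁ := h₁ (n₁ + n₂ + n₃ + 1) (by omega)
  have e₂ := h₂ (n₁ + n₂ + n₃ + 1) (by omega)
  have e₃ := h₃ (n₁ + n₂ + n₃ + 1) (by omega)
  have e₄ := key (n₁ + n₂ + n₃ + 1)
  linarith
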